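/- For every integer t with 1 ≤ t ≤ 25 there exists a linear code over the field with 64 elements of length 78, dimension 2t, minimum distance at least 76 − 3t, and locality 2. In particular (t = 21), there exists a linear code over the field with 64 elements of length 78, dimension 42, minimum distance at least 13, and locality 2. -/

import Mathlib

/-!
On the affine curve `x ^ r = q(y)` consider the functions `f₀(y) + f₁(y) x` with `deg fᵢ < t`.
The norm of such a function to `F(y)` is `f₀ ^ r - q (-f₁) ^ r`; it is nonzero when `r ∤ deg q`, it
has degree at most `r (t - 1) + deg q`, and it vanishes at `y₀` at least as often as the function
vanishes on the fibre over `y₀`. Hence evaluation at many points of the curve is injective with few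
zeros, and since the functions are affine in `x` along a fibre, two points of a fibre determine the
values at all the others.

For the curve `y ^ 2 + y = x ^ 3` over `𝔽₆₄` one needs 26 fibres of three points with `x ≠ 0`. Write
`𝔽₆₄ = K ω ⊕ K ω ^ 2` with `K = 𝔽₈` and `ω` a primitive cube root of unity. Then `y = a ω + b ω ^ 2`
gives `y ^ 2 + y = (a + b ^ 2) ω + (b + a ^ 2) ω ^ 2`, which is a nonzero cube as soon as it lies in
`Kˣ`, `Kˣ ω` or `Kˣ ω ^ 2`. This happens for `b = a ^ 2`, `a = b ^ 2`, `a = b` (each with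
`a ≠ 0, 1`) and `b = a + 1`, that is, for `6 + 6 + 6 + 8 = 26` values of `y`.
-/

open Polynomial

namespace LocallyRecoverable

section NormPolynomial

variable {F : Type*} [Field F] {r : ℕ} {q f₀ f₁ : F[X]}

/-- The norm of the function `f₀(y) + f₁(y) x` on the curve `x ^ r = q(y)` to the field `F(y)`,
as a polynomial in `y`. -/
noncomputable def normPoly (r : ℕ) (q f₀ f₁ : F[X]) : F[X] :=
  f₀ ^ r - q * (-f₁) ^ r

lemma normPoly_ne_zero (hq : ¬ r ∣ q.natDegree) (hf : (f₀, f₁) ≠ 0) : normPoly r q f₀ f₁ ≠ 0 := by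
  intro hN
  have hr : r ≠ 0 := by
    rintro rfl
    refine hq ?_
    rw [normPoly, pow_zero, pow_zero, mul_one, sub_eq_zero] at hN
    simp [← hN]
  have hpow : f₀ ^ r = q * (-f₁) ^ r := sub_eq_zero.1 hN
  have hq0 : q ≠ 0 := by
    rintro rfl
    simp at hq
  have hf₁ : f₁ ≠ 0 := by
    rintro rfl
    simp_all
  refine hq ((Nat.dvd_add_left (dvd_mul_right r f₁.natDegree)).1 ⟨f₀.natDegree, ?_⟩)
  rw [← natDegree_pow f₀, hpow, natDegree_mul hq0 (pow_ne_zero r (neg_ne_zero.2 hf₁)),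
    natDegree_pow, natDegree_neg]

lemma natDegree_normPoly_le {d : ℕ} (h₀ : f₀.natDegree ≤ d) (h₁ : f₁.natDegree ≤ d) :
    (normPoly r q f₀ f₁).natDegree ≤ r * d + q.natDegree := by
  refine (natDegree_sub_le_of_le (natDegree_pow_le_of_le r h₀) (natDegree_mul_le_of_le le_rfl
    (natDegree_pow_le_of_le r ((natDegree_neg f₁).trans_le h₁)))).trans ?_
  omega

lemma isRoot_normPoly {x y : F} (hx : x ^ r = q.eval y) (h : f₀.eval y + f₁.eval y * x = 0) :
    (normPoly r q f₀ f₁).IsRoot y := by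
  simp only [normPoly, IsRoot.def, eval_sub, eval_mul, eval_pow, eval_neg]
  rw [eq_neg_of_add_eq_zero_left h, ← hx]
  ring

lemma pow_dvd_normPoly {y : F} (h₀ : f₀.IsRoot y) (h₁ : f₁.IsRoot y) :
    (X - C y) ^ r ∣ normPoly r q f₀ f₁ :=
  dvd_sub (pow_dvd_pow_of_dvd (dvd_iff_isRoot.2 h₀) r)
    ((pow_dvd_pow_of_dvd (dvd_iff_isRoot.2 h₁).neg_right r).mul_left q)

lemma card_le_rootMultiplicity_normPoly (hr : 0 < r) (hN : normPoly r q f₀ f₁ ≠ 0) {y : F}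
    {s : Finset F} (hs : ∀ x ∈ s, x ^ r = q.eval y ∧ f₀.eval y + f₁.eval y * x = 0) :
    s.card ≤ (normPoly r q f₀ f₁).rootMultiplicity y := by
  classical
  obtain rfl | ⟨x₀, hx₀⟩ := s.eq_empty_or_nonempty
  · simp
  by_cases h₁ : f₁.eval y = 0
  · have h₀ : f₀.eval y = 0 := by simpa [h₁] using (hs x₀ hx₀).2
    have hroots : s ⊆ (nthRoots r (q.eval y)).toFinset := fun x hx ↦ by
      rw [Multiset.mem_toFinset, mem_nthRoots hr]
      exact (hs x hx).1
    calc s.card ≤ (nthRoots r (q.eval y)).toFinset.card := Finset.card_le_card hroots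
      _ ≤ r := (Multiset.toFinset_card_le _).trans (card_nthRoots r _)
      _ ≤ _ := (le_rootMultiplicity_iff hN).2 (pow_dvd_normPoly h₀ h₁)
  · have hcard : s.card ≤ 1 := Finset.card_le_one.2 fun x hx x' hx' ↦
      mul_left_cancel₀ h₁ (add_left_cancel ((hs x hx).2.trans (hs x' hx').2.symm))
    exact hcard.trans ((rootMultiplicity_pos hN).2 (isRoot_normPoly (hs x₀ hx₀).1 (hs x₀ hx₀).2))

lemma card_zeros_le_natDegree_normPoly (hr : 0 < r) (hN : normPoly r q f₀ f₁ ≠ 0)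
    {Z : Finset (F × F)}
    (hZ : ∀ P ∈ Z, P.1 ^ r = q.eval P.2 ∧ f₀.eval P.2 + f₁.eval P.2 * P.1 = 0) :
    Z.card ≤ (normPoly r q f₀ f₁).natDegree := by
  classical
  have hmaps : Set.MapsTo Prod.snd (Z : Set (F × F)) (normPoly r q f₀ f₁).roots.toFinset :=
    fun P hP ↦ Multiset.mem_toFinset.2
      ((mem_roots hN).2 (isRoot_normPoly (hZ P hP).1 (hZ P hP).2))
  have hfibre (y : F) : (Z.filter (·.2 = y)).card ≤ (normPoly r q f₀ f₁).roots.count y := by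
    have hinj : Set.InjOn Prod.fst (Z.filter (·.2 = y) : Set (F × F)) := by
      intro P hP P' hP' h
      rw [Finset.mem_coe, Finset.mem_filter] at hP hP'
      exact Prod.ext h (hP.2.trans hP'.2.symm)
    rw [count_roots, ← Finset.card_image_of_injOn hinj]
    refine card_le_rootMultiplicity_normPoly hr hN fun x hx ↦ ?_
    obtain ⟨P, hP, rfl⟩ := Finset.mem_image.1 hx
    obtain ⟨hPZ, rfl⟩ := Finset.mem_filter.1 hP
    exact hZ P hPZ
  calc Z.card = ∑ y ∈ (normPoly r q f₀ f₁).roots.toFinset, (Z.filter (·.2 = y)).card :=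
        Finset.card_eq_sum_card_fiberwise hmaps
    _ ≤ ∑ y ∈ (normPoly r q f₀ f₁).roots.toFinset, (normPoly r q f₀ f₁).roots.count y :=
        Finset.sum_le_sum fun y _ ↦ hfibre y
    _ = Multiset.card (normPoly r q f₀ f₁).roots := Multiset.toFinset_sum_count_eq _
    _ ≤ _ := card_roots' _

end NormPolynomial

section Code

variable {F ι : Type*} [Field F] {t r : ℕ} {q : F[X]} {P : ι → F × F}

/-- A linear code has locality `r` if every coordinate of a codeword is determined by at most `r`
other coordinates. -/
def HasLocality (C : Submodule F (ι → F)) (r : ℕ) : Prop :=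
  ∀ i : ι, ∃ I : Finset ι, i ∉ I ∧ I.card ≤ r ∧
    ∀ x ∈ C, ∀ y ∈ C, (∀ j ∈ I, x j = y j) → x i = y i

/-- Evaluation of the functions `f₀(y) + f₁(y) x`, with `deg f₀, deg f₁ < t`, at the points
`(x, y) = P i` of the plane. Its range is the code attached to `t` and `P`. -/
noncomputable def evalMap (t : ℕ) (P : ι → F × F) :
    (degreeLT F t × degreeLT F t) →ₗ[F] (ι → F) :=
  LinearMap.pi fun i ↦
    ((leval (P i).2 ∘ₗ (degreeLT F t).subtype).coprod
      ((P i).1 • leval (P i).2 ∘ₗ (degreeLT F t).subtype))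

lemma evalMap_apply (f : degreeLT F t × degreeLT F t) (i : ι) :
    evalMap t P f i = (f.1 : F[X]).eval (P i).2 + (f.2 : F[X]).eval (P i).2 * (P i).1 := by
  simp [evalMap, leval, mul_comm]

lemma card_add_le_hammingNorm_evalMap [Fintype ι] [DecidableEq F] (hq : ¬ r ∣ q.natDegree)
    (hr : 0 < r) (hP : Function.Injective P) (hcurve : ∀ i, (P i).1 ^ r = q.eval (P i).2)
    {f : degreeLT F t × degreeLT F t} (hf : f ≠ 0) :
    Fintype.card ι + r ≤ hammingNorm (evalMap t P f) + (r * t + q.natDegree) := by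
  obtain _ | d := t
  · have : Subsingleton (degreeLT F 0) := (degreeLTEquiv F 0).toEquiv.subsingleton
    exact absurd (Subsingleton.elim f 0) hf
  have hdeg (g : degreeLT F (d + 1)) : (g : F[X]).natDegree ≤ d :=
    natDegree_le_of_degree_le (mem_degreeLE.1 (degreeLT_succ_eq_degreeLE (R := F) ▸ g.2))
  have hf' : ((f.1 : F[X]), (f.2 : F[X])) ≠ 0 := by
    simpa [Prod.ext_iff] using hf
  have hzeros : (Finset.univ.filter (evalMap (d + 1) P f · = 0)).card ≤ r * d + q.natDegree := by
    rw [← Finset.card_map ⟨P, hP⟩]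
    refine (card_zeros_le_natDegree_normPoly hr (normPoly_ne_zero hq hf') fun Q hQ ↦ ?_).trans
      (natDegree_normPoly_le (hdeg f.1) (hdeg f.2))
    obtain ⟨i, hi, rfl⟩ := Finset.mem_map.1 hQ
    exact ⟨hcurve i, evalMap_apply f i ▸ (Finset.mem_filter.1 hi).2⟩
  have hsplit : (Finset.univ.filter (evalMap (d + 1) P f · = 0)).card +
      hammingNorm (evalMap (d + 1) P f) = Fintype.card ι :=
    Finset.card_filter_add_card_filter_not _
  linarith

lemma finrank_range_evalMap [Fintype ι] (hq : ¬ r ∣ q.natDegree) (hr : 0 < r)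
    (hP : Function.Injective P) (hcurve : ∀ i, (P i).1 ^ r = q.eval (P i).2)
    (ht : r * t + q.natDegree < Fintype.card ι + r) :
    Module.finrank F (LinearMap.range (evalMap t P)) = 2 * t := by
  classical
  have hinj : Function.Injective (evalMap t P) := by
    refine (injective_iff_map_eq_zero _).2 fun f hf ↦ ?_
    by_contra hne
    have := card_add_le_hammingNorm_evalMap hq hr hP hcurve hne
    rw [hf, hammingNorm_zero] at this
    omega
  rw [LinearMap.finrank_range_of_inj hinj, Module.finrank_prod,
    Module.finrank_eq_card_basis (degreeLT.basis F t), Fintype.card_fin, two_mul]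

lemma hasLocality_range_evalMap (hP : Function.Injective P)
    (hfibre : ∀ i, ∃ j k, j ≠ i ∧ k ≠ i ∧ j ≠ k ∧ (P j).2 = (P i).2 ∧ (P k).2 = (P i).2) :
    HasLocality (LinearMap.range (evalMap t P)) 2 := by
  classical
  intro i
  obtain ⟨j, k, hji, hki, hjk, hj, hk⟩ := hfibre i
  refine ⟨{j, k}, by simp [hji.symm, hki.symm], Finset.card_le_two, ?_⟩
  rintro _ ⟨f, rfl⟩ _ ⟨g, rfl⟩ h
  have hvj := h j (by simp)
  have hvk := h k (by simp)
  rw [evalMap_apply, evalMap_apply, hj] at hvj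
  rw [evalMap_apply, evalMap_apply, hk] at hvk
  have hx : (P j).1 - (P k).1 ≠ 0 :=
    sub_ne_zero.2 fun hx ↦ hjk (hP (Prod.ext hx (hj.trans hk.symm)))
  have hslope : (f.2 : F[X]).eval (P i).2 = (g.2 : F[X]).eval (P i).2 :=
    mul_right_cancel₀ hx (by linear_combination hvj - hvk)
  rw [evalMap_apply, evalMap_apply]
  linear_combination hvj + ((P i).1 - (P j).1) * hslope

lemma exists_points_of_primitiveRoot {n : ℕ} (hr : 2 < r) {ω : F} (hω : IsPrimitiveRoot ω r)
    {s : Finset F} (hs : ∀ y ∈ s, ∃ x ≠ 0, x ^ r = q.eval y) (hn : s.card * r = n) :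
    ∃ P : Fin n → F × F, Function.Injective P ∧ (∀ i, (P i).1 ^ r = q.eval (P i).2) ∧
      ∀ i, ∃ j k, j ≠ i ∧ k ≠ i ∧ j ≠ k ∧ (P j).2 = (P i).2 ∧ (P k).2 = (P i).2 := by
  choose! x hx0 hx using hs
  let e : Fin n ≃ s × Fin r := (Fintype.equivFinOfCardEq (by simp [hn])).symm
  refine ⟨fun i ↦ (x (e i).1 * ω ^ ((e i).2 : ℕ), (e i).1), fun i j hij ↦ ?_, fun i ↦ ?_,
    fun i ↦ ?_⟩
  · obtain ⟨hxy, hy⟩ := Prod.mk.inj hij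
    rw [← hy] at hxy
    have hpow := mul_left_cancel₀ (hx0 _ (e i).1.2) hxy
    exact e.injective (Prod.ext (Subtype.ext hy)
      (Fin.ext (hω.pow_inj (e i).2.2 (e j).2.2 hpow)))
  · simp only
    rw [mul_pow, hx _ (e i).1.2, pow_right_comm, hω.pow_eq_one, one_pow, mul_one]
  · obtain ⟨⟨y, k⟩, rfl⟩ := e.symm.surjective i
    obtain ⟨k₁, hk₁, -⟩ := Fin.exists_ne_and_ne_of_two_lt k k hr
    obtain ⟨k₂, hk₂, hk₁₂⟩ := Fin.exists_ne_and_ne_of_two_lt k k₁ hr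
    exact ⟨e.symm (y, k₁), e.symm (y, k₂), by simp [hk₁], by simp [hk₂], by simp [hk₁₂.symm],
      by simp, by simp⟩

end Code

section PointCount

variable {K F : Type*} [Field K] [Field F]

lemma eq_one_of_pow_three_eq_one (hK : Function.Injective fun a : K ↦ a ^ 3) {a : K}
    (ha : a ^ 3 = 1) : a = 1 :=
  hK (ha.trans (one_pow 3).symm)

lemma add_sq_ne_zero [CharP K 2] {a : K} (h0 : a ≠ 0) (h1 : a ≠ 1) : a + a ^ 2 ≠ 0 := by
  intro h
  refine h1 (mul_left_cancel₀ h0 ?_)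
  linear_combination h - a * CharTwo.two_eq_zero (R := K)

lemma sq_add_self_add_one_ne_zero [CharP K 2] (hK : Function.Injective fun a : K ↦ a ^ 3) (a : K) :
    a ^ 2 + a + 1 ≠ 0 := by
  intro h
  obtain rfl := eq_one_of_pow_three_eq_one hK (a := a) (by linear_combination (a - 1) * h)
  exact one_ne_zero (α := K) (by linear_combination h - CharTwo.two_eq_zero (R := K))

lemma add_pow_four_ne_zero [CharP K 2] (hK : Function.Injective fun a : K ↦ a ^ 3) {a : K}
    (h0 : a ≠ 0) (h1 : a ≠ 1) : a + a ^ 4 ≠ 0 := by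
  have hfactor : a + a ^ 4 = (a + a ^ 2) * (a ^ 2 + a + 1) := by
    linear_combination -(a ^ 2 + a ^ 3) * CharTwo.two_eq_zero (R := K)
  rw [hfactor]
  exact mul_ne_zero (add_sq_ne_zero h0 h1) (sq_add_self_add_one_ne_zero hK a)

/-- Four families of pairs `(a, b)` for which `y = a ω + b ω ^ 2`, with `ω` a primitive cube root
of unity, has `y ^ 2 + y` in `Kˣ`, `Kˣ ω` or `Kˣ ω ^ 2`; here `K` is a finite field of
characteristic two without primitive cube roots of unity. -/
def fibrePairs (K : Type*) [Field K] [Fintype K] [DecidableEq K] : Finset (K × K) :=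
  (Finset.univ \ {0, 1}).image (fun a ↦ (a, a ^ 2)) ∪
    (Finset.univ \ {0, 1}).image (fun a ↦ (a ^ 2, a)) ∪
    (Finset.univ \ {0, 1}).image (fun a ↦ (a, a)) ∪ Finset.univ.image (fun a ↦ (a, a + 1))

-- Two of the four families could only meet where `a = a ^ 4`, `a = a ^ 2`, `a ^ 2 + a + 1 = 0` or
-- `1 = 0`.
lemma card_fibrePairs [Fintype K] [DecidableEq K] [CharP K 2]
    (hK : Function.Injective fun a : K ↦ a ^ 3) :
    (fibrePairs K).card = 4 * Fintype.card K - 6 := by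
  have hne := sq_add_self_add_one_ne_zero hK
  rw [fibrePairs]
  set E : Finset K := Finset.univ \ {0, 1} with hE
  have hcardE : E.card = Fintype.card K - 2 := by
    rw [Finset.card_sdiff_of_subset (Finset.subset_univ _), Finset.card_univ,
      Finset.card_pair zero_ne_one]
  have hmem (a : K) : a ∈ E ↔ a ≠ 0 ∧ a ≠ 1 := by simp [hE]
  have hdisj₁ : Disjoint (E.image fun a ↦ (a, a ^ 2)) (E.image fun a ↦ (a ^ 2, a)) := by
    simp only [Finset.disjoint_left, Finset.mem_image]
    grind
  have hdisj₂ : Disjoint ((E.image fun a ↦ (a, a ^ 2)) ∪ E.image fun a ↦ (a ^ 2, a))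
      (E.image fun a ↦ (a, a)) := by
    simp only [Finset.disjoint_left, Finset.mem_union, Finset.mem_image]
    grind
  have hdisj₃ : Disjoint (((E.image fun a ↦ (a, a ^ 2)) ∪ E.image fun a ↦ (a ^ 2, a)) ∪
      E.image fun a ↦ (a, a)) (Finset.univ.image fun a ↦ (a, a + 1)) := by
    simp only [Finset.disjoint_left, Finset.mem_union, Finset.mem_image]
    grind
  have hfst (g : K → K) : Function.Injective fun a ↦ (a, g a) := fun _ _ h ↦ (Prod.mk.inj h).1
  have hsnd (g : K → K) : Function.Injective fun a ↦ (g a, a) := fun _ _ h ↦ (Prod.mk.inj h).2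
  rw [Finset.card_union_of_disjoint hdisj₃, Finset.card_union_of_disjoint hdisj₂,
    Finset.card_union_of_disjoint hdisj₁, Finset.card_image_of_injective E (hfst _),
    Finset.card_image_of_injective E (hsnd _), Finset.card_image_of_injective E (hfst _),
    Finset.card_image_of_injective _ (hfst _), hcardE, Finset.card_univ]
  have : 1 < Fintype.card K := Fintype.one_lt_card
  omega

/-- The nonzero pairs `(a, b)` for which `a ω + b ω ^ 2`, with `ω` a primitive cube root of unity in
characteristic two, lies in `Kˣ`, `Kˣ ω` or `Kˣ ω ^ 2`. -/
def IsOmegaMonomial (p : K × K) : Prop :=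
  p ≠ 0 ∧ (p.1 = 0 ∨ p.2 = 0 ∨ p.1 = p.2)

lemma isOmegaMonomial_of_mem_fibrePairs [Fintype K] [DecidableEq K] [CharP K 2]
    (hK : Function.Injective fun a : K ↦ a ^ 3) {a b : K} (h : (a, b) ∈ fibrePairs K) :
    IsOmegaMonomial (a + b ^ 2, b + a ^ 2) := by
  simp only [fibrePairs, Finset.mem_union, Finset.mem_image, Finset.mem_sdiff, Finset.mem_univ,
    Finset.mem_insert, Finset.mem_singleton, Prod.mk.injEq, true_and, not_or] at h
  rcases h with ((⟨a, ⟨h0, h1⟩, rfl, rfl⟩ | ⟨a, ⟨h0, h1⟩, rfl, rfl⟩) | ⟨a, ⟨h0, h1⟩, rfl, rfl⟩) |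
    ⟨a, rfl, rfl⟩
  · refine ⟨fun h ↦ add_pow_four_ne_zero hK h0 h1 ?_, Or.inr (Or.inl (CharTwo.add_self_eq_zero _))⟩
    linear_combination (Prod.mk_eq_zero.1 h).1
  · refine ⟨fun h ↦ add_pow_four_ne_zero hK h0 h1 ?_, Or.inl (CharTwo.add_self_eq_zero _)⟩
    linear_combination (Prod.mk_eq_zero.1 h).2
  · exact ⟨fun h ↦ add_sq_ne_zero h0 h1 (Prod.mk_eq_zero.1 h).1, Or.inr (Or.inr rfl)⟩
  · refine ⟨fun h ↦ sq_add_self_add_one_ne_zero hK a ?_, Or.inr (Or.inr ?_)⟩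
    · linear_combination (Prod.mk_eq_zero.1 h).2
    · linear_combination a * CharTwo.two_eq_zero (R := K)

variable {ω ζ : F}

/-- The element `a ω + b ω ^ 2` of `F` with coordinates `p = (a, b)` in `K`. These coordinates are
used instead of `1, ω` because Frobenius interchanges `ω` and `ω ^ 2`. -/
def omegaCombination (σ : K →+* F) (ω : F) (p : K × K) : F :=
  σ p.1 * ω + σ p.2 * ω ^ 2

lemma omegaCombination_injective {σ : K →+* F} (hω : ω ≠ 0) (hσ : ω ∉ Set.range σ) :
    Function.Injective (omegaCombination σ ω) := by
  rintro ⟨a, b⟩ ⟨a', b'⟩ h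
  have hlin : σ (a - a') = σ (b' - b) * ω := by
    refine mul_right_cancel₀ hω ?_
    simp only [omegaCombination] at h
    rw [map_sub, map_sub]
    linear_combination h
  have hb : b' - b = 0 := by
    by_contra hne
    refine hσ ⟨(a - a') / (b' - b), ?_⟩
    rw [map_div₀, hlin, mul_div_cancel_left₀ ω ((map_ne_zero σ).2 hne)]
  rw [hb, map_zero, zero_mul, map_eq_zero] at hlin
  exact Prod.ext (sub_eq_zero.1 hlin) (sub_eq_zero.1 hb).symm

lemma sq_add_self_omegaCombination [CharP F 2] (σ : K →+* F) (hω : ω ^ 2 + ω + 1 = 0)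
    (a b : K) :
    omegaCombination σ ω (a, b) ^ 2 + omegaCombination σ ω (a, b) =
      omegaCombination σ ω (a + b ^ 2, b + a ^ 2) := by
  simp only [omegaCombination, map_add, map_pow]
  linear_combination σ b ^ 2 * ω * (ω - 1) * hω +
    σ a * σ b * ω ^ 3 * CharTwo.two_eq_zero (R := F)

lemma exists_pow_three_eq_omegaCombination [CharP F 2] (σ : K →+* F)
    (hK : Function.Surjective fun a : K ↦ a ^ 3) (hζ : ζ ^ 6 + ζ ^ 3 + 1 = 0) {p : K × K}
    (hp : IsOmegaMonomial p) :
    ∃ x ≠ 0, x ^ 3 = omegaCombination σ (ζ ^ 3) p := by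
  have hζ0 : ζ ≠ 0 := by
    rintro rfl
    simp at hζ
  have hcube {a : K} (ha : a ≠ 0) (k : ℕ) : ∃ x ≠ 0, x ^ 3 = σ a * (ζ ^ 3) ^ k := by
    obtain ⟨u, rfl⟩ := hK a
    have hu : u ≠ 0 := by
      rintro rfl
      simp at ha
    exact ⟨σ u * ζ ^ k, mul_ne_zero ((map_ne_zero σ).2 hu) (pow_ne_zero k hζ0), by
      rw [map_pow]
      ring⟩
  obtain ⟨a, b⟩ := p
  obtain ⟨hp, rfl | rfl | rfl⟩ : (a, b) ≠ 0 ∧ (a = 0 ∨ b = 0 ∨ a = b) := hp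
  · simpa [omegaCombination] using hcube (a := b) (by simpa using hp) 2
  · simpa [omegaCombination] using hcube (a := a) (by simpa using hp) 1
  · obtain ⟨x, hx0, hx⟩ := hcube (a := a) (by simpa using hp) 0
    refine ⟨x, hx0, hx.trans ?_⟩
    simp only [omegaCombination]
    linear_combination -σ a * hζ + σ a * CharTwo.two_eq_zero (R := F)

lemma exists_finset_pow_three_eq_sq_add_self [Finite K] [CharP K 2]
    (hK : Function.Injective fun a : K ↦ a ^ 3) (σ : K →+* F) (hζ : IsPrimitiveRoot ζ 9) :
    ∃ s : Finset F, s.card = 4 * Nat.card K - 6 ∧ ∀ y ∈ s, ∃ x ≠ 0, x ^ 3 = y ^ 2 + y := by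
  classical
  have := Fintype.ofFinite K
  have : CharP F 2 := charP_of_injective_ringHom σ.injective 2
  have hω : IsPrimitiveRoot (ζ ^ 3) 3 := hζ.pow (by norm_num) rfl
  have hω2 : (ζ ^ 3) ^ 2 + ζ ^ 3 + 1 = 0 := by
    have := hω.geom_sum_eq_zero (by norm_num)
    simp only [Finset.sum_range_succ, Finset.sum_range_zero] at this
    linear_combination this
  have hωσ : ζ ^ 3 ∉ Set.range σ := by
    rintro ⟨a, ha⟩
    have ha1 : a = 1 := eq_one_of_pow_three_eq_one hK
      (σ.injective (by rw [map_pow, ha, hω.pow_eq_one, map_one]))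
    exact hω.ne_one (by norm_num) (by rw [← ha, ha1, map_one])
  refine ⟨(fibrePairs K).image (omegaCombination σ (ζ ^ 3)), ?_, ?_⟩
  · rw [Finset.card_image_of_injective _
      (omegaCombination_injective (hω.ne_zero (by norm_num)) hωσ), card_fibrePairs hK,
      Nat.card_eq_fintype_card]
  · intro y hy
    obtain ⟨⟨a, b⟩, hab, rfl⟩ := Finset.mem_image.1 hy
    rw [sq_add_self_omegaCombination σ hω2]
    exact exists_pow_three_eq_omegaCombination σ (Finite.surjective_of_injective hK)
      (by linear_combination hω2) (isOmegaMonomial_of_mem_fibrePairs hK hab)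

end PointCount

section FieldOfOrder64

variable {F : Type*} [Field F]

lemma pow_injective_of_coprime [Finite F] {n : ℕ} (hn0 : n ≠ 0)
    (hn : (Nat.card F - 1).Coprime n) : Function.Injective fun a : F ↦ a ^ n := by
  intro a b (h : a ^ n = b ^ n)
  obtain rfl | hb := eq_or_ne b 0
  · simpa [hn0] using h
  have ha : a ≠ 0 := by
    rintro rfl
    exact pow_ne_zero n hb (by rw [← h, zero_pow hn0])
  rw [← Nat.card_units] at hn
  have hunits : Units.mk0 a ha ^ n = Units.mk0 b hb ^ n := Units.ext (by simpa using h)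
  exact congrArg Units.val ((powCoprime hn).injective hunits)

lemma exists_primitiveRoot_of_dvd [Finite F] {n : ℕ} (hn : n ∣ Nat.card F - 1) :
    ∃ ζ : F, IsPrimitiveRoot ζ n := by
  obtain ⟨g, hg⟩ := IsCyclic.exists_ofOrder_eq_natCard (α := Fˣ)
  obtain ⟨m, hm⟩ := hn
  have hroot : IsPrimitiveRoot (g : F) (Nat.card Fˣ) :=
    IsPrimitiveRoot.coe_units_iff.2 (IsPrimitiveRoot.iff_orderOf.2 hg)
  exact ⟨g ^ m, hroot.pow Nat.card_pos (by rw [Nat.card_units, hm, mul_comm])⟩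

lemma nonempty_galoisField_ringHom {p m n : ℕ} [Fact p.Prime] (hm : m ≠ 0)
    (hmn : m ∣ n) (hF : Nat.card F = p ^ n) : Nonempty (GaloisField p m →+* F) := by
  have : Finite F := Nat.finite_of_card_ne_zero (by rw [hF]; exact pow_ne_zero n (NeZero.ne p))
  have := Fintype.ofFinite F
  have : CharP F p := charP_of_card_eq_prime_pow (Nat.card_eq_fintype_card.symm.trans hF)
  let := ZMod.algebra F p
  have hfinrank : Module.finrank (ZMod p) F = n :=
    Nat.pow_right_injective (Fact.out : p.Prime).two_le
      ((FiniteField.pow_finrank_eq_natCard p F).trans hF)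
  obtain ⟨σ⟩ := FiniteField.nonempty_algHom_of_finrank_dvd (F := ZMod p) (K := GaloisField p m)
    (L := F) (by rwa [GaloisField.finrank p hm, hfinrank])
  exact ⟨σ⟩

lemma exists_finset_card_eq_26_pow_three_eq_sq_add_self (hF : Nat.card F = 64) :
    ∃ s : Finset F, s.card = 26 ∧ ∀ y ∈ s, ∃ x ≠ 0, x ^ 3 = y ^ 2 + y := by
  have : Finite F := Nat.finite_of_card_ne_zero (by simp [hF])
  have hK : Nat.card (GaloisField 2 3) = 8 := GaloisField.card 2 3 (by norm_num)
  obtain ⟨σ⟩ := nonempty_galoisField_ringHom (F := F) (p := 2) (m := 3) (n := 6) (by norm_num)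
    (by norm_num) (by simp [hF])
  obtain ⟨ζ, hζ⟩ := exists_primitiveRoot_of_dvd (F := F) (n := 9) (by norm_num [hF])
  simpa [hK] using exists_finset_pow_three_eq_sq_add_self
    (pow_injective_of_coprime (F := GaloisField 2 3) (by norm_num) (by norm_num [hK])) σ hζ

end FieldOfOrder64

end LocallyRecoverable

open LocallyRecoverable in
theorem exists_LRC_F64_length78_general {F : Type*} [Field F] (hF : Nat.card F = 64) {t : ℕ}
    (ht : t ≤ 26) :
    ∃ C : Submodule F (Fin 78 → F), Module.finrank F C = 2 * t ∧
      (∀ x ∈ C, x ≠ 0 → 79 - 3 * t ≤ Nat.card {i // x i ≠ 0}) ∧ HasLocality C 2 := by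
  classical
  have : Finite F := Nat.finite_of_card_ne_zero (by simp [hF])
  have hq : (X ^ 2 + X : F[X]).natDegree = 2 := by compute_degree!
  have hq3 : ¬ 3 ∣ (X ^ 2 + X : F[X]).natDegree := by norm_num [hq]
  obtain ⟨ω, hω⟩ := exists_primitiveRoot_of_dvd (F := F) (n := 3) (by norm_num [hF])
  obtain ⟨s, hs, hcube⟩ := exists_finset_card_eq_26_pow_three_eq_sq_add_self hF
  obtain ⟨P, hP, hcurve, hfibre⟩ := exists_points_of_primitiveRoot (q := X ^ 2 + X) (n := 78)
    (by norm_num) hω (by simpa using hcube) (by rw [hs])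
  refine ⟨LinearMap.range (evalMap t P), ?_, ?_, hasLocality_range_evalMap hP hfibre⟩
  · refine finrank_range_evalMap hq3 (by norm_num) hP hcurve ?_
    rw [hq, Fintype.card_fin]
    omega
  · rintro _ ⟨f, rfl⟩ hf
    have hweight := card_add_le_hammingNorm_evalMap hq3 (by norm_num) hP hcurve
      (ne_zero_of_map hf)
    rw [hq, Fintype.card_fin] at hweight
    rw [Nat.card_eq_fintype_card, Fintype.card_subtype]
    change _ ≤ hammingNorm (evalMap t P f)
    omega

/-- Example 3.1: for each `1 ≤ t ≤ 25` there is a linear code over `F_64` of length 78,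
dimension `2t`, minimum distance at least `76 - 3t`, and locality 2. -/
theorem exists_LRC_F64_length78 :
    ∀ t : ℕ, 1 ≤ t → t ≤ 25 →
      ∃ C : Submodule (GaloisField 2 6) (Fin 78 → GaloisField 2 6),
        Module.finrank (GaloisField 2 6) C = 2 * t ∧
        (∀ x : Fin 78 → GaloisField 2 6, x ∈ C → x ≠ 0 →
          76 - 3 * t ≤ Nat.card {i : Fin 78 // x i ≠ 0}) ∧
        (∀ i : Fin 78, ∃ I : Finset (Fin 78), i ∉ I ∧ I.card ≤ 2 ∧
          ∀ x ∈ C, ∀ y ∈ C, (∀ j ∈ I, x j = y j) → x i = y i) := by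
  intro t _ ht
  obtain ⟨C, hdim, hdist, hloc⟩ := exists_LRC_F64_length78_general
    (GaloisField.card 2 6 (by norm_num)) (ht.trans (by norm_num))
  exact ⟨C, hdim, fun x hx hx0 ↦ (by omega : _ ≤ 79 - 3 * t).trans (hdist x hx hx0), hloc⟩
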